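/- Let q > 0 and let p > 2 be real. Then the functions y ↦ y^{−3}(y^p S_p(y)/Γ(p) − 1) and y ↦ y^{−3}(y^{p+1} S_{p+1}(y)/Γ(p+1) − 1) are both integrable on (0, ∞), and (p−1)(p−2) ∫_0^∞ y^{−3}(y^p S_p(y)/Γ(p) − 1) dy = p(p−1) ∫_0^∞ y^{−3}(y^{p+1} S_{p+1}(y)/Γ(p+1) − 1) dy; that is, the dimension moment M_1(p) of the cusp satisfies the recursion M_1(p) = M_1(p+1). -/

import Mathlib

open MeasureTheory

/-- `S_p(y) = ∑_{n≥0} (n+q)^{p-1} e^{-(n+q)y}`. -/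
noncomputable def cuspS (q p y : ℝ) : ℝ :=
  ∑' n : ℕ, ((n : ℝ) + q) ^ (p - 1) * Real.exp (-(((n : ℝ) + q) * y))

/-!
Put `E_p(y) = S_p(y) - Γ(p) y ^ (-p)`, and let `W^s` be the Weyl fractional integral
`W^s F (y) = Γ(s)⁻¹ ∫_0^∞ t ^ (s - 1) F(y + t) dt`. Then `M₁(p) = W^(p - 2) E_p (0)`. The functions
`S_p` and `Γ(p) y ^ (-p)` are the Laplace transforms of `x ^ (p - 1)` against the counting measure
of `q + ℕ` and Lebesgue measure on `(0, ∞)`, and `W^s` multiplies `e ^ (-xy)` by `x ^ (-s)`; hence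
`W^s E_(p + s) = E_p`. The semigroup law `W^(p - 2) W^s = W^(p + s - 2)` now gives
`M₁(p) = M₁(p + s)` for every `s > 0`, and it also carries absolute convergence from `p + s` down
to `p`. So convergence only has to be checked at large integers, where `E_p` is, up to sign, an
iterated derivative of `E_1(y) = e ^ (-qy) / (1 - e ^ (-y)) - 1 / y`, a function analytic at `0`.
-/

open Filter Topology Set Asymptotics

theorem integral_rpow_mul_sub_rpow {a b u : ℝ} (ha : 0 < a) (hb : 0 < b) (hu : 0 < u) :
    ∫ t in 0..u, t ^ (a - 1) * (u - t) ^ (b - 1) =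
      Real.Gamma a * Real.Gamma b / Real.Gamma (a + b) * u ^ (a + b - 1) := by
  apply Complex.ofReal_injective
  calc ((∫ t in 0..u, t ^ (a - 1) * (u - t) ^ (b - 1) : ℝ) : ℂ)
    _ = ∫ t in 0..u, (t : ℂ) ^ ((a : ℂ) - 1) * ((u : ℂ) - t) ^ ((b : ℂ) - 1) := by
      rw [← intervalIntegral.integral_ofReal]
      refine intervalIntegral.integral_congr fun t ht ↦ ?_
      rw [uIcc_of_le hu.le] at ht
      simp [Complex.ofReal_cpow ht.1, Complex.ofReal_cpow (sub_nonneg.2 ht.2)]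
    _ = (u : ℂ) ^ ((a : ℂ) + b - 1) * Complex.betaIntegral a b :=
      Complex.betaIntegral_scaled a b hu
    _ = _ := by
      rw [Complex.betaIntegral_eq_Gamma_mul_div _ _ (by simpa) (by simpa)]
      simp [Complex.ofReal_cpow hu.le, Complex.Gamma_ofReal, ← Complex.ofReal_add, mul_comm]

/-- Absolute convergence of the Weyl fractional integral of order `s` of `F` at `y`. -/
def WeylIntegrable (s : ℝ) (F : ℝ → ℝ) (y : ℝ) : Prop :=
  IntegrableOn (fun t ↦ t ^ (s - 1) * F (y + t)) (Ioi 0)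

/-- The Weyl fractional integral of order `s` of `F` at `y`, based at `+∞`; at `y = 0` it is the
Mellin transform of `F` at `s` divided by `Γ(s)`. -/
noncomputable def weylIntegral (s : ℝ) (F : ℝ → ℝ) (y : ℝ) : ℝ :=
  (Real.Gamma s)⁻¹ * ∫ t in Ioi 0, t ^ (s - 1) * F (y + t)

section Congr

variable {s y : ℝ} {F G : ℝ → ℝ}

theorem eqOn_rpow_mul_comp_add (s : ℝ) (h : EqOn F G (Ioi y)) :
    EqOn (fun t ↦ t ^ (s - 1) * F (y + t)) (fun t ↦ t ^ (s - 1) * G (y + t)) (Ioi 0) :=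
  fun t ht ↦ congrArg (t ^ (s - 1) * ·) (h (lt_add_of_pos_right y ht))

theorem WeylIntegrable.congr (hF : WeylIntegrable s F y) (h : EqOn F G (Ioi y)) :
    WeylIntegrable s G y :=
  IntegrableOn.congr_fun hF (eqOn_rpow_mul_comp_add s h) measurableSet_Ioi

theorem weylIntegral_congr (h : EqOn F G (Ioi y)) : weylIntegral s F y = weylIntegral s G y :=
  congrArg _ (setIntegral_congr_fun measurableSet_Ioi (eqOn_rpow_mul_comp_add s h))

theorem weylIntegral_sub (hF : WeylIntegrable s F y) (hG : WeylIntegrable s G y) :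
    weylIntegral s (fun z ↦ F z - G z) y = weylIntegral s F y - weylIntegral s G y := by
  simp only [weylIntegral, mul_sub]
  rw [integral_sub hF hG, mul_sub]

end Congr

/-- The kernel, up to the factor `(Γ(a) Γ(b))⁻¹`, of the composition of the Weyl integrals of orders
`a` and `b`, as a function of the pair `(t, u)` of the intermediate and the final displacement. -/
noncomputable def weylKernel (a b : ℝ) : ℝ × ℝ → ℝ :=
  {z | z.1 < z.2}.indicator fun z ↦ z.1 ^ (a - 1) * (z.2 - z.1) ^ (b - 1)

theorem measurable_weylKernel (a b : ℝ) : Measurable (weylKernel a b) :=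
  Measurable.indicator (by fun_prop) (measurableSet_lt measurable_fst measurable_snd)

theorem weylKernel_nonneg {a b t : ℝ} (ht : 0 ≤ t) (u : ℝ) : 0 ≤ weylKernel a b (t, u) := by
  refine indicator_apply_nonneg fun htu ↦ ?_
  have : 0 ≤ u - t := sub_nonneg.2 (le_of_lt htu)
  positivity

theorem integral_weylKernel_left {a b u : ℝ} (ha : 0 < a) (hb : 0 < b) (hu : 0 < u) :
    ∫ t in Ioi 0, weylKernel a b (t, u) =
      Real.Gamma a * Real.Gamma b / Real.Gamma (a + b) * u ^ (a + b - 1) := by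
  rw [← integral_rpow_mul_sub_rpow ha hb hu, intervalIntegral.integral_of_le hu.le,
    integral_Ioc_eq_integral_Ioo, ← Ioi_inter_Iio, ← setIntegral_indicator measurableSet_Iio]
  rfl

theorem integrableOn_weylKernel_left {a b u : ℝ} (ha : 0 < a) (hb : 0 < b) (hu : 0 < u) :
    IntegrableOn (fun t ↦ weylKernel a b (t, u)) (Ioi 0) := by
  refine .of_integral_ne_zero ?_
  rw [integral_weylKernel_left ha hb hu]
  positivity

theorem integral_weylKernel_mul_right (a b : ℝ) {t : ℝ} (ht : 0 < t) (G : ℝ → ℝ) :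
    ∫ u in Ioi 0, weylKernel a b (t, u) * G u =
      t ^ (a - 1) * ∫ v in Ioi 0, v ^ (b - 1) * G (t + v) := by
  have kernel_mul_eq (u : ℝ) : weylKernel a b (t, u) * G u =
      (Ioi t).indicator (fun u ↦ t ^ (a - 1) * ((u - t) ^ (b - 1) * G u)) u := by
    simp [weylKernel, indicator_apply, mul_assoc]
  simp_rw [kernel_mul_eq]
  rw [setIntegral_indicator measurableSet_Ioi, Ioi_inter_Ioi, max_eq_right ht.le,
    integral_const_mul, ← (measurePreserving_add_left volume t).setIntegral_preimage_emb
      (measurableEmbedding_addLeft t)]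
  simp

theorem integrable_weylKernel_mul {a b : ℝ} (ha : 0 < a) (hb : 0 < b) {G : ℝ → ℝ}
    (hG : IntegrableOn (fun u ↦ u ^ (a + b - 1) * G u) (Ioi 0)) :
    Integrable (fun z : ℝ × ℝ ↦ weylKernel a b z * G z.2)
      ((volume.restrict (Ioi 0)).prod (volume.restrict (Ioi 0))) := by
  have hGm : AEStronglyMeasurable G (volume.restrict (Ioi 0)) := by
    have hm : AEStronglyMeasurable (fun u : ℝ ↦ u ^ (-(a + b - 1)))
        (volume.restrict (Ioi 0)) := by fun_prop
    refine (hm.mul hG.aestronglyMeasurable).congr ?_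
    filter_upwards [ae_restrict_mem measurableSet_Ioi] with u hu
    simp [← mul_assoc, ← Real.rpow_add hu]
  refine (integrable_prod_iff'
    ((measurable_weylKernel a b).aestronglyMeasurable.mul hGm.comp_snd)).2 ⟨?_, ?_⟩
  · filter_upwards [ae_restrict_mem measurableSet_Ioi] with u hu
    exact (integrableOn_weylKernel_left ha hb hu).mul_const (G u)
  · refine (hG.norm.const_mul (Real.Gamma a * Real.Gamma b / Real.Gamma (a + b))).congr ?_
    filter_upwards [ae_restrict_mem measurableSet_Ioi] with u hu
    simp only [Pi.mul_apply, norm_mul]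
    rw [integral_mul_const, setIntegral_congr_fun measurableSet_Ioi fun t (ht : 0 < t) ↦
      Real.norm_of_nonneg (weylKernel_nonneg ht.le u), integral_weylKernel_left ha hb hu,
      Real.norm_of_nonneg (Real.rpow_nonneg (le_of_lt hu) _)]
    ring

section Semigroup

variable {a b y : ℝ} {F : ℝ → ℝ}

theorem rpow_mul_weylIntegral_eq {t : ℝ} (ht : 0 < t) :
    t ^ (a - 1) * weylIntegral b F (y + t) =
      (Real.Gamma b)⁻¹ * ∫ u in Ioi 0, weylKernel a b (t, u) * F (y + u) := by
  rw [integral_weylKernel_mul_right a b ht fun u ↦ F (y + u), weylIntegral]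
  simp only [add_assoc]
  ring

theorem weylIntegrable_weylIntegral (ha : 0 < a) (hb : 0 < b)
    (hF : WeylIntegrable (a + b) F y) : WeylIntegrable a (weylIntegral b F) y :=
  IntegrableOn.congr_fun ((integrable_weylKernel_mul ha hb hF).integral_prod_left.const_mul _)
    (fun _ ht ↦ (rpow_mul_weylIntegral_eq ht).symm) measurableSet_Ioi

theorem weylIntegral_weylIntegral (ha : 0 < a) (hb : 0 < b) (hF : WeylIntegrable (a + b) F y) :
    weylIntegral a (weylIntegral b F) y = weylIntegral (a + b) F y := by
  have integral_kernel : ∀ u ∈ Ioi (0 : ℝ), ∫ t in Ioi 0, weylKernel a b (t, u) * F (y + u) =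
      Real.Gamma a * Real.Gamma b / Real.Gamma (a + b) * (u ^ (a + b - 1) * F (y + u)) :=
    fun u hu ↦ by rw [integral_mul_const, integral_weylKernel_left ha hb hu, mul_assoc]
  have fubini : ∫ t in Ioi 0, ∫ u in Ioi 0, weylKernel a b (t, u) * F (y + u) =
      Real.Gamma a * Real.Gamma b / Real.Gamma (a + b) *
        ∫ u in Ioi 0, u ^ (a + b - 1) * F (y + u) := by
    rw [integral_integral_swap (integrable_weylKernel_mul ha hb hF),
      setIntegral_congr_fun measurableSet_Ioi integral_kernel, integral_const_mul]
  rw [weylIntegral, setIntegral_congr_fun measurableSet_Ioi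
    fun _ ht ↦ rpow_mul_weylIntegral_eq ht, integral_const_mul, fubini, weylIntegral]
  have := (Real.Gamma_pos_of_pos ha).ne'
  have := (Real.Gamma_pos_of_pos hb).ne'
  field_simp

end Semigroup

/-- The `p`-th Laplace moment `∫ x ^ (p - 1) e ^ (-xy) dν(x)` of a measure `ν`, meant for measures
carried by `(0, ∞)`. -/
noncomputable def laplaceMoment (ν : Measure ℝ) (p y : ℝ) : ℝ :=
  ∫ x, x ^ (p - 1) * Real.exp (-(x * y)) ∂ν

theorem integral_rpow_mul_exp_neg_mul_add {p s x : ℝ} (hs : 0 < s) (hx : 0 < x) (y : ℝ) :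
    ∫ t in Ioi 0, t ^ (s - 1) * (x ^ (p + s - 1) * Real.exp (-(x * (y + t)))) =
      Real.Gamma s * (x ^ (p - 1) * Real.exp (-(x * y))) := by
  have split_exp (t : ℝ) : t ^ (s - 1) * (x ^ (p + s - 1) * Real.exp (-(x * (y + t)))) =
      x ^ (p + s - 1) * Real.exp (-(x * y)) * (t ^ (s - 1) * Real.exp (-(x * t))) := by
    rw [mul_add, neg_add, Real.exp_add]
    ring
  have split_rpow : x ^ (p + s - 1) = x ^ (p - 1) * x ^ s := by
    rw [← Real.rpow_add hx]
    ring_nf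
  simp_rw [split_exp]
  rw [integral_const_mul, Real.integral_rpow_mul_exp_neg_mul_Ioi hs hx, split_rpow,
    Real.div_rpow zero_le_one hx.le, Real.one_rpow]
  field_simp

section Laplace

variable {ν : Measure ℝ} {p s y : ℝ}

theorem integrable_prod_rpow_mul_exp_neg_mul_add [SFinite ν] (hν : ∀ᵐ x ∂ν, 0 < x) (hs : 0 < s)
    (hint : Integrable (fun x ↦ x ^ (p - 1) * Real.exp (-(x * y))) ν) :
    Integrable (fun z : ℝ × ℝ ↦
        z.2 ^ (s - 1) * (z.1 ^ (p + s - 1) * Real.exp (-(z.1 * (y + z.2)))))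
      (ν.prod (volume.restrict (Ioi 0))) := by
  refine (integrable_prod_iff (Measurable.aestronglyMeasurable (by fun_prop))).2 ⟨?_, ?_⟩
  · filter_upwards [hν] with x hx
    refine .of_integral_ne_zero ?_
    rw [integral_rpow_mul_exp_neg_mul_add hs hx]
    positivity
  · refine (hint.const_mul (Real.Gamma s)).congr ?_
    filter_upwards [hν] with x hx
    rw [← integral_rpow_mul_exp_neg_mul_add hs hx]
    refine setIntegral_congr_fun measurableSet_Ioi fun t (ht : 0 < t) ↦ ?_
    exact (Real.norm_of_nonneg (by positivity)).symm

theorem weylIntegrable_laplaceMoment [SFinite ν] (hν : ∀ᵐ x ∂ν, 0 < x) (hs : 0 < s)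
    (hint : Integrable (fun x ↦ x ^ (p - 1) * Real.exp (-(x * y))) ν) :
    WeylIntegrable s (laplaceMoment ν (p + s)) y := by
  simp only [WeylIntegrable, laplaceMoment, ← integral_const_mul]
  exact (integrable_prod_rpow_mul_exp_neg_mul_add hν hs hint).integral_prod_right

theorem weylIntegral_laplaceMoment [SFinite ν] (hν : ∀ᵐ x ∂ν, 0 < x) (hs : 0 < s)
    (hint : Integrable (fun x ↦ x ^ (p - 1) * Real.exp (-(x * y))) ν) :
    weylIntegral s (laplaceMoment ν (p + s)) y = laplaceMoment ν p y := by
  have inner_integral : ∀ᵐ x ∂ν,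
      ∫ t in Ioi 0, t ^ (s - 1) * (x ^ (p + s - 1) * Real.exp (-(x * (y + t)))) =
        Real.Gamma s * (x ^ (p - 1) * Real.exp (-(x * y))) :=
    hν.mono fun x hx ↦ integral_rpow_mul_exp_neg_mul_add hs hx y
  simp only [weylIntegral, laplaceMoment, ← integral_const_mul (_ ^ (s - 1))]
  rw [← integral_integral_swap (integrable_prod_rpow_mul_exp_neg_mul_add hν hs hint),
    integral_congr_ae inner_integral, integral_const_mul,
    inv_mul_cancel_left₀ (Real.Gamma_pos_of_pos hs).ne']

theorem laplaceMoment_volume (hp : 0 < p) (hy : 0 < y) :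
    laplaceMoment (volume.restrict (Ioi 0)) p y = Real.Gamma p * y ^ (-p) := by
  simp only [laplaceMoment, mul_comm _ y]
  rw [Real.integral_rpow_mul_exp_neg_mul_Ioi hp hy, one_div, Real.inv_rpow hy.le,
    ← Real.rpow_neg hy.le, mul_comm]

theorem integrable_rpow_mul_exp_neg_mul_Ioi (hp : 0 < p) (hy : 0 < y) :
    Integrable (fun x ↦ x ^ (p - 1) * Real.exp (-(x * y))) (volume.restrict (Ioi 0)) := by
  refine .of_integral_ne_zero ?_
  rw [← laplaceMoment, laplaceMoment_volume hp hy]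
  positivity

end Laplace

theorem analyticAt_dslope {𝕜 E : Type*} [NontriviallyNormedField 𝕜] [NormedAddCommGroup E]
    [NormedSpace 𝕜 E] {f : 𝕜 → E} {a : 𝕜} (hf : AnalyticAt 𝕜 f a) :
    AnalyticAt 𝕜 (dslope f a) a :=
  let ⟨_, hP⟩ := hf
  ⟨_, hP.has_fpower_series_dslope_fslope⟩

/-- The error `S_p(y) - Γ(p) y ^ (-p)` made when the sum defining `S_p(y)` is replaced by the
integral of the same function of `n + q` over `(0, ∞)`. -/
noncomputable def cuspError (q p y : ℝ) : ℝ :=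
  cuspS q p y - Real.Gamma p * y ^ (-p)

/-- The counting measure of `q + ℕ`, whose Laplace moments are the sums `S_p`. -/
noncomputable def cuspMeasure (q : ℝ) : Measure ℝ :=
  Measure.sum fun n : ℕ ↦ Measure.dirac ((n : ℝ) + q)

section Cusp

variable {q p s y : ℝ}

instance : SFinite (cuspMeasure q) := inferInstanceAs (SFinite (Measure.sum _))

theorem ae_cuspMeasure_pos (hq : 0 < q) : ∀ᵐ x ∂cuspMeasure q, 0 < x := by
  refine Measure.ae_sum_iff.2 fun n ↦ ?_
  rw [ae_dirac_iff measurableSet_Ioi]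
  positivity

theorem laplaceMoment_cuspMeasure (q p y : ℝ) :
    laplaceMoment (cuspMeasure q) p y = cuspS q p y := by
  simpa [laplaceMoment, cuspMeasure, cuspS] using
    integral_sum_dirac (x := fun n : ℕ ↦ (n : ℝ) + q) (c := fun _ ↦ 1)
      (f := fun x ↦ x ^ (p - 1) * Real.exp (-(x * y))) (by simp)

theorem summable_cuspS (q p : ℝ) (hy : 0 < y) :
    Summable fun n : ℕ ↦ ((n : ℝ) + q) ^ (p - 1) * Real.exp (-(((n : ℝ) + q) * y)) := by
  have tendsto_add : Tendsto (fun n : ℕ ↦ (n : ℝ) + q) atTop atTop :=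
    tendsto_atTop_add_const_right _ _ tendsto_natCast_atTop_atTop
  have rpow_isBigO := ((isLittleO_rpow_exp_pos_mul_atTop (p - 1) (half_pos hy)).comp_tendsto
    tendsto_add).isBigO
  have geometric : Summable fun n : ℕ ↦ Real.exp (-(q * (y / 2))) * Real.exp (n * -(y / 2)) :=
    (Real.summable_exp_nat_mul_iff.2 (by linarith)).mul_left _
  refine summable_of_isBigO_nat geometric ((rpow_isBigO.mul (isBigO_refl
    (fun n : ℕ ↦ Real.exp (-(((n : ℝ) + q) * y))) atTop)).congr_right fun n ↦ ?_)
  simp only [Function.comp_apply, ← Real.exp_add]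
  ring_nf

theorem integrable_rpow_mul_exp_neg_mul_cuspMeasure (q p : ℝ) (hy : 0 < y) :
    Integrable (fun x ↦ x ^ (p - 1) * Real.exp (-(x * y))) (cuspMeasure q) :=
  integrable_sum_measure (fun _ ↦ integrable_dirac enorm_lt_top)
    (by simpa only [integral_dirac] using (summable_cuspS q p hy).norm)

theorem cuspError_eqOn_laplaceMoment_sub (q : ℝ) (hp : 0 < p) :
    EqOn (cuspError q p) (fun z ↦ laplaceMoment (cuspMeasure q) p z -
      laplaceMoment (volume.restrict (Ioi 0)) p z) (Ioi 0) :=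
  fun z hz ↦ by
    simp only [cuspError, laplaceMoment_cuspMeasure, laplaceMoment_volume hp hz]

theorem weylIntegral_cuspError (hq : 0 < q) (hp : 0 < p) (hs : 0 < s) (hy : 0 < y) :
    weylIntegral s (cuspError q (p + s)) y = cuspError q p y := by
  have volume_pos : ∀ᵐ x ∂volume.restrict (Ioi (0 : ℝ)), 0 < x := ae_restrict_mem measurableSet_Ioi
  have cusp_integrable := integrable_rpow_mul_exp_neg_mul_cuspMeasure q p hy
  have volume_integrable := integrable_rpow_mul_exp_neg_mul_Ioi hp hy
  rw [weylIntegral_congr ((cuspError_eqOn_laplaceMoment_sub q (add_pos hp hs)).mono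
      (Ioi_subset_Ioi hy.le)),
    weylIntegral_sub (weylIntegrable_laplaceMoment (ae_cuspMeasure_pos hq) hs cusp_integrable)
      (weylIntegrable_laplaceMoment volume_pos hs volume_integrable),
    weylIntegral_laplaceMoment (ae_cuspMeasure_pos hq) hs cusp_integrable,
    weylIntegral_laplaceMoment volume_pos hs volume_integrable,
    cuspError_eqOn_laplaceMoment_sub q hp hy]

theorem hasDerivAt_cuspS (hq : 0 < q) (hy : 0 < y) :
    HasDerivAt (cuspS q p) (-cuspS q (p + 1) y) y := by
  have term_deriv (n : ℕ) (z : ℝ) :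
      HasDerivAt (fun z ↦ ((n : ℝ) + q) ^ (p - 1) * Real.exp (-(((n : ℝ) + q) * z)))
        (-(((n : ℝ) + q) ^ (p + 1 - 1) * Real.exp (-(((n : ℝ) + q) * z)))) z := by
    have hn : (n : ℝ) + q ≠ 0 := by positivity
    refine (((hasDerivAt_const_mul ((n : ℝ) + q)).fun_neg.exp).const_mul _).congr_deriv ?_
    rw [add_sub_right_comm, Real.rpow_add_one hn]
    ring
  have term_bound (n : ℕ) (z : ℝ) (hz : z ∈ Ioi (y / 2)) :
      ‖-(((n : ℝ) + q) ^ (p + 1 - 1) * Real.exp (-(((n : ℝ) + q) * z)))‖ ≤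
        ((n : ℝ) + q) ^ (p + 1 - 1) * Real.exp (-(((n : ℝ) + q) * (y / 2))) := by
    rw [norm_neg, Real.norm_of_nonneg (by positivity)]
    gcongr
    exact le_of_lt hz
  have hy_mem : y ∈ Ioi (y / 2) := half_lt_self hy
  rw [cuspS, ← tsum_neg]
  exact hasDerivAt_tsum_of_isPreconnected (summable_cuspS q (p + 1) (half_pos hy)) isOpen_Ioi
    isPreconnected_Ioi (fun n z _ ↦ term_deriv n z) term_bound hy_mem (summable_cuspS q p hy) hy_mem

theorem hasDerivAt_cuspError (hq : 0 < q) (hp : p ≠ 0) (hy : 0 < y) :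
    HasDerivAt (cuspError q p) (-cuspError q (p + 1) y) y := by
  refine ((hasDerivAt_cuspS hq hy).sub
    ((Real.hasDerivAt_rpow_const (Or.inl hy.ne')).const_mul (Real.Gamma p))).congr_deriv ?_
  rw [cuspError, Real.Gamma_add_one hp, neg_add']
  ring

theorem cuspS_nonneg (hq : 0 < q) : 0 ≤ cuspS q p y :=
  tsum_nonneg fun n ↦ by positivity

theorem cuspS_le_exp_mul_cuspS {d : ℝ} (hq : 0 < q) (hd : 0 < d) (hdy : d ≤ y) :
    cuspS q p y ≤ Real.exp (-(q * (y - d))) * cuspS q p d := by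
  rw [cuspS, cuspS, ← tsum_mul_left]
  refine (summable_cuspS q p (hd.trans_le hdy)).tsum_le_tsum (fun n ↦ ?_)
    ((summable_cuspS q p hd).mul_left _)
  rw [mul_left_comm, ← Real.exp_add]
  gcongr
  nlinarith [mul_nonneg n.cast_nonneg (sub_nonneg.2 hdy)]

theorem cuspS_isBigO_exp (hq : 0 < q) (p : ℝ) :
    cuspS q p =O[atTop] fun y ↦ Real.exp (-q * y) := by
  refine .of_bound (Real.exp q * cuspS q p 1) ?_
  filter_upwards [eventually_ge_atTop 1] with y hy
  rw [Real.norm_of_nonneg (cuspS_nonneg hq), Real.norm_of_nonneg (Real.exp_nonneg _)]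
  calc cuspS q p y ≤ Real.exp (-(q * (y - 1))) * cuspS q p 1 :=
        cuspS_le_exp_mul_cuspS hq one_pos hy
    _ = Real.exp q * cuspS q p 1 * Real.exp (-q * y) := by
        rw [mul_right_comm, ← Real.exp_add]
        ring_nf

theorem cuspError_isBigO_atTop (hq : 0 < q) (p : ℝ) :
    cuspError q p =O[atTop] fun y ↦ y ^ (-p) :=
  ((cuspS_isBigO_exp hq p).trans (isLittleO_exp_neg_mul_rpow_atTop hq (-p)).isBigO).sub
    (isBigO_const_mul_self _ _ _)

theorem cuspS_one (q : ℝ) (hy : 0 < y) :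
    cuspS q 1 y = Real.exp (-(q * y)) / (1 - Real.exp (-y)) := by
  have term_eq (n : ℕ) : ((n : ℝ) + q) ^ ((1 : ℝ) - 1) * Real.exp (-(((n : ℝ) + q) * y)) =
      Real.exp (-(q * y)) * Real.exp (-y) ^ n := by
    rw [← Real.exp_nat_mul, ← Real.exp_add, sub_self, Real.rpow_zero, one_mul]
    ring_nf
  simp_rw [cuspS, term_eq]
  rw [tsum_mul_left, tsum_geometric_of_lt_one (Real.exp_nonneg _) (by simpa using hy),
    div_eq_mul_inv]

theorem exists_analyticAt_eqOn_cuspError_one (q : ℝ) :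
    ∃ h : ℝ → ℝ, AnalyticAt ℝ h 0 ∧ EqOn (cuspError q 1) h (Ioi 0) := by
  -- For `y > 0`, `E_1(y) = (ψ y / y) / φ y`, where `φ 0 = 1` and `ψ 0 = 0`.
  let φ : ℝ → ℝ := dslope (fun y ↦ 1 - Real.exp (-y)) 0
  let ψ : ℝ → ℝ := fun y ↦ Real.exp (-(q * y)) - φ y
  have φ_analytic : AnalyticAt ℝ φ 0 := analyticAt_dslope (by fun_prop)
  have ψ_analytic : AnalyticAt ℝ ψ 0 := by fun_prop
  have φ_zero : φ 0 = 1 := by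
    have : HasDerivAt (fun y : ℝ ↦ 1 - Real.exp (-y)) 1 0 := by
      simpa using (hasDerivAt_neg (0 : ℝ)).exp.const_sub 1
    simp [φ, this.deriv]
  refine ⟨fun y ↦ dslope ψ 0 y / φ y,
    (analyticAt_dslope ψ_analytic).div φ_analytic (by simp [φ_zero]), fun y (hy : 0 < y) ↦ ?_⟩
  have φ_eq : φ y = (1 - Real.exp (-y)) / y := by
    simp [φ, dslope_of_ne _ hy.ne', slope_def_field]
  have dslope_ψ_eq : dslope ψ 0 y = (Real.exp (-(q * y)) - (1 - Real.exp (-y)) / y) / y := by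
    simp [ψ, dslope_of_ne _ hy.ne', slope_def_field, φ_zero, φ_eq]
  have one_sub_exp_ne : 1 - Real.exp (-y) ≠ 0 :=
    (sub_pos.2 (Real.exp_lt_one_iff.2 (neg_lt_zero.2 hy))).ne'
  simp only [cuspError, cuspS_one q hy, dslope_ψ_eq, φ_eq, Real.Gamma_one, Real.rpow_neg_one]
  field_simp

theorem exists_analyticAt_eqOn_cuspError_nat (hq : 0 < q) (k : ℕ) :
    ∃ h : ℝ → ℝ, AnalyticAt ℝ h 0 ∧ EqOn (cuspError q (k + 1)) h (Ioi 0) := by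
  induction k with
  | zero => simpa using exists_analyticAt_eqOn_cuspError_one q
  | succ k ih =>
    obtain ⟨h, h_analytic, h_eq⟩ := ih
    refine ⟨-deriv h, h_analytic.deriv.neg, fun y hy ↦ ?_⟩
    have h_deriv := (hasDerivAt_cuspError hq (by positivity) hy).congr_of_eventuallyEq
      (h_eq.symm.eventuallyEq_of_mem (Ioi_mem_nhds hy))
    simp [h_deriv.deriv]

theorem cuspError_nat_isBigO_zero (hq : 0 < q) (k : ℕ) :
    cuspError q (k + 1) =O[𝓝[>] 0] fun _ ↦ (1 : ℝ) := by
  obtain ⟨h, h_analytic, h_eq⟩ := exists_analyticAt_eqOn_cuspError_nat hq k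
  exact ((h_analytic.continuousAt.isBigO_one ℝ).mono nhdsWithin_le_nhds).congr'
    (h_eq.symm.eventuallyEq_of_mem self_mem_nhdsWithin) .rfl

theorem weylIntegrable_cuspError_nat (hq : 0 < q) {k : ℕ} (hk : 1 < k) :
    WeylIntegrable (k + 1 - 2) (cuspError q (k + 1)) 0 := by
  have hk' : (1 : ℝ) < k := by exact_mod_cast hk
  have error_continuous : ContinuousOn (cuspError q (k + 1)) (Ioi 0) := fun y hy ↦
    (hasDerivAt_cuspError hq (by positivity) hy).continuousAt.continuousWithinAt
  simpa only [WeylIntegrable, zero_add] using mellin_convergent_of_isBigO_scalar (b := 0)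
    (error_continuous.locallyIntegrableOn measurableSet_Ioi) (cuspError_isBigO_atTop hq (k + 1))
    (by linarith) (by simpa using cuspError_nat_isBigO_zero hq k) (by linarith)

theorem weylIntegrable_cuspError (hq : 0 < q) (hp : 2 < p) :
    WeylIntegrable (p - 2) (cuspError q p) 0 := by
  obtain ⟨k, hk⟩ := exists_nat_gt p
  have one_lt_k : 1 < k := by exact_mod_cast (by linarith : (1 : ℝ) < k)
  obtain ⟨s, hs, hps⟩ : ∃ s, 0 < s ∧ p + s = k + 1 := ⟨k + 1 - p, by linarith, by ring⟩
  have nat_integrable : WeylIntegrable (p - 2 + s) (cuspError q (p + s)) 0 := by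
    rw [← add_sub_right_comm, hps]
    exact weylIntegrable_cuspError_nat hq one_lt_k
  exact (weylIntegrable_weylIntegral (by linarith) hs nat_integrable).congr
    fun y hy ↦ weylIntegral_cuspError hq (by linarith) hs hy

theorem weylIntegral_cuspError_add (hq : 0 < q) (hp : 2 < p) (hs : 0 < s) :
    weylIntegral (p - 2) (cuspError q p) 0 =
      weylIntegral (p + s - 2) (cuspError q (p + s)) 0 := by
  have error_integrable := weylIntegrable_cuspError hq (by linarith : 2 < p + s)
  rw [add_sub_right_comm] at error_integrable ⊢
  rw [← weylIntegral_weylIntegral (by linarith) hs error_integrable]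
  exact weylIntegral_congr fun y hy ↦ (weylIntegral_cuspError hq (by linarith) hs hy).symm

theorem weylIntegral_cuspError_eq {r : ℝ} (hq : 0 < q) (hp : 2 < p) (hr : 2 < r) :
    weylIntegral (p - 2) (cuspError q p) 0 = weylIntegral (r - 2) (cuspError q r) 0 := by
  rw [weylIntegral_cuspError_add hq hp (by linarith : 0 < r),
    weylIntegral_cuspError_add hq hr (by linarith : 0 < p), add_comm p r]

theorem momentIntegrand_eq (q : ℝ) (hp : 0 < p) (hy : 0 < y) :
    y ^ (-(3 : ℝ)) * (y ^ p * cuspS q p y / Real.Gamma p - 1) =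
      (Real.Gamma p)⁻¹ * (y ^ (p - 2 - 1) * cuspError q p (0 + y)) := by
  have Gamma_ne : Real.Gamma p ≠ 0 := (Real.Gamma_pos_of_pos hp).ne'
  have rpow_split : y ^ (p - 2 - 1) = y ^ (-(3 : ℝ)) * y ^ p := by
    rw [← Real.rpow_add hy]
    ring_nf
  rw [cuspError, zero_add, rpow_split, Real.rpow_neg hy.le p]
  field_simp

theorem integrableOn_momentIntegrand (hq : 0 < q) (hp : 2 < p) :
    IntegrableOn (fun y ↦ y ^ (-(3 : ℝ)) * (y ^ p * cuspS q p y / Real.Gamma p - 1)) (Ioi 0) :=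
  IntegrableOn.congr_fun ((weylIntegrable_cuspError hq hp).const_mul _)
    (fun _ hy ↦ (momentIntegrand_eq q (by linarith) hy).symm) measurableSet_Ioi

theorem dimensionMoment_eq_weylIntegral (q : ℝ) (hp : 2 < p) :
    (p - 1) * (p - 2) *
        ∫ y in Ioi 0, y ^ (-(3 : ℝ)) * (y ^ p * cuspS q p y / Real.Gamma p - 1) =
      weylIntegral (p - 2) (cuspError q p) 0 := by
  have Gamma_eq : Real.Gamma p = (p - 1) * ((p - 2) * Real.Gamma (p - 2)) := by
    rw [← Real.Gamma_add_one (by linarith), sub_add_eq_add_sub,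
      show p + 1 - 2 = p - 1 by ring, ← Real.Gamma_add_one (by linarith), sub_add_cancel]
  have p_sub_one_ne : p - 1 ≠ 0 := by linarith
  have p_sub_two_ne : p - 2 ≠ 0 := by linarith
  rw [setIntegral_congr_fun measurableSet_Ioi fun _ hy ↦ momentIntegrand_eq q (by linarith) hy,
    integral_const_mul, weylIntegral, Gamma_eq]
  field_simp

end Cusp

theorem dimension_moment_recursion_general {q p r : ℝ} (hq : 0 < q) (hp : 2 < p) (hr : 2 < r) :
    IntegrableOn (fun y ↦ y ^ (-(3 : ℝ)) * (y ^ p * cuspS q p y / Real.Gamma p - 1)) (Ioi 0) ∧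
    IntegrableOn (fun y ↦ y ^ (-(3 : ℝ)) * (y ^ r * cuspS q r y / Real.Gamma r - 1)) (Ioi 0) ∧
    (p - 1) * (p - 2) *
        ∫ y in Ioi 0, y ^ (-(3 : ℝ)) * (y ^ p * cuspS q p y / Real.Gamma p - 1) =
      (r - 1) * (r - 2) *
        ∫ y in Ioi 0, y ^ (-(3 : ℝ)) * (y ^ r * cuspS q r y / Real.Gamma r - 1) := by
  refine ⟨integrableOn_momentIntegrand hq hp, integrableOn_momentIntegrand hq hr, ?_⟩
  rw [dimensionMoment_eq_weylIntegral q hp, dimensionMoment_eq_weylIntegral q hr,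
    weylIntegral_cuspError_eq hq hp hr]

/-- Recursion for the dimension moment of the cusp: `M₁(p) = M₁(p+1)` where
`M₁(p) = (p-2)(p-1) ∫₀^∞ y^{-3} (yᵖ S_p(y)/Γ(p) - 1) dy`. -/
theorem dimension_moment_recursion (q p : ℝ) (hq : 0 < q) (hp : 2 < p) :
    IntegrableOn (fun y : ℝ => y ^ (-(3 : ℝ)) * (y ^ p * cuspS q p y / Real.Gamma p - 1))
      (Set.Ioi 0) ∧
    IntegrableOn (fun y : ℝ =>
        y ^ (-(3 : ℝ)) * (y ^ (p + 1) * cuspS q (p + 1) y / Real.Gamma (p + 1) - 1))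
      (Set.Ioi 0) ∧
    (p - 1) * (p - 2) *
        ∫ y in Set.Ioi (0 : ℝ), y ^ (-(3 : ℝ)) * (y ^ p * cuspS q p y / Real.Gamma p - 1)
      = p * (p - 1) *
        ∫ y in Set.Ioi (0 : ℝ),
          y ^ (-(3 : ℝ)) * (y ^ (p + 1) * cuspS q (p + 1) y / Real.Gamma (p + 1) - 1) := by
  simpa only [add_sub_cancel_right, show p + 1 - 2 = p - 1 by ring] using
    dimension_moment_recursion_general hq hp (by linarith : 2 < p + 1)
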